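/- Characteristic polynomial of the correlation matrix for f(z) = z^{-2}(z−a)²(z−b)² with one zero inside and one outside the unit circle (Example 3). Let a, b ∈ ℝ with 0 < |a| < 1 < |b| and a·b ≠ 1, let u(z) = (z−a)(z−b)/((1−a z)(1−b z)), and for λ ∈ ℂ let Φ_λ be the 2×2-matrix-valued symbol on the unit circle with Φ_λ(e^{iθ}) = [[iλ, u(e^{iθ})], [−u(e^{−iθ}), iλ]]. Then for every integer N ≥ 2 and every λ ∈ ℂ, D_N[Φ_λ] = (1 − λ²)^{N−2} · ( λ⁴ + (λ²/(b−a)²)·( 2(1−a²)(1−b²) − (1−ab)²·(a^{2N} + b^{−2N}) ) + ( ( a^N b^{−N} (1−ab)² − (1−a²)(1−b²) ) / (b−a)² )² ). -/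

import Mathlib

open scoped BigOperators
open Filter

/-- The `k`-th Fourier coefficient of a symbol `t` on the unit circle. -/
noncomputable def symbolCoeff (t : ℂ → ℂ) (k : ℤ) : ℂ :=
  (1 / (2 * Real.pi)) *
    ∫ θ in (0:ℝ)..(2 * Real.pi),
      t (Complex.exp (Complex.I * (θ : ℂ))) * Complex.exp (-(Complex.I * (k : ℂ) * (θ : ℂ)))

/-- The `N × N` Toeplitz determinant `D_N[t]` generated by the symbol `t`. -/
noncomputable def toeplitzDet (t : ℂ → ℂ) (N : ℕ) : ℂ :=
  Matrix.det (Matrix.of fun m n : Fin N => symbolCoeff t ((m : ℤ) - (n : ℤ)))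

/-- The `k`-th (matrix) Fourier coefficient of a `2 × 2`-matrix-valued symbol. -/
noncomputable def blockSymbolCoeff (Φ : ℂ → Matrix (Fin 2) (Fin 2) ℂ) (k : ℤ) :
    Matrix (Fin 2) (Fin 2) ℂ :=
  Matrix.of fun i j => symbolCoeff (fun w => Φ w i j) k

/-- The `2N × 2N` block Toeplitz determinant `D_N[Φ]` generated by the
`2 × 2`-matrix-valued symbol `Φ`. -/
noncomputable def blockToeplitzDet (Φ : ℂ → Matrix (Fin 2) (Fin 2) ℂ) (N : ℕ) : ℂ :=
  Matrix.det (Matrix.of fun p q : Fin N × Fin 2 =>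
    blockSymbolCoeff Φ ((p.1 : ℤ) - (q.1 : ℤ)) p.2 q.2)

/-!
On the unit circle `Φ_λ` has the constant diagonal `iλ` and the off-diagonal entries `u(w)` and
`-u(w⁻¹)`, so `D_N[Φ_λ] = det (-λ² + T Tᵀ)` for the scalar Toeplitz matrix `T` of `u`. Since
`u(w) u(w⁻¹) = 1`, the bi-infinite Toeplitz matrix of `u` times its transpose is the identity. The
Fourier coefficients of `u` are geometric in each direction, with ratios `a` and `b⁻¹`, so
truncation to `[0, N)` removes two terms of rank one: `T Tᵀ = 1 - (rank two)`. The
Weinstein–Aronszajn identity reduces the determinant to a `2 × 2` one, whose entries are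
finite geometric sums.
-/

open Matrix

section SymbolCoeff

theorem symbolCoeff_congr {s t : ℂ → ℂ} (h : ∀ w : ℂ, ‖w‖ = 1 → s w = t w) :
    symbolCoeff s = symbolCoeff t := by
  have hexp (θ : ℝ) : s (Complex.exp (Complex.I * θ)) = t (Complex.exp (Complex.I * θ)) :=
    h _ (Complex.norm_exp_I_mul_ofReal θ)
  funext k
  simp only [symbolCoeff, hexp]

theorem symbolCoeff_const_mul (r : ℂ) (t : ℂ → ℂ) (k : ℤ) :
    symbolCoeff (fun w => r * t w) k = r * symbolCoeff t k := by
  simp only [symbolCoeff, mul_assoc r, intervalIntegral.integral_const_mul]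
  ring

theorem symbolCoeff_neg (t : ℂ → ℂ) (k : ℤ) :
    symbolCoeff (fun w => -t w) k = -symbolCoeff t k := by
  simpa only [neg_one_mul] using symbolCoeff_const_mul (-1) t k

theorem symbolCoeff_zpow_mul (j : ℤ) (t : ℂ → ℂ) (k : ℤ) :
    symbolCoeff (fun w => w ^ j * t w) k = symbolCoeff t (k - j) := by
  have hexp (θ : ℝ) : Complex.exp (-(Complex.I * ((k - j : ℤ) : ℂ) * θ)) =
      Complex.exp (Complex.I * θ) ^ j * Complex.exp (-(Complex.I * k * θ)) := by
    rw [← Complex.exp_int_mul, ← Complex.exp_add]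
    push_cast
    ring_nf
  simp only [symbolCoeff, hexp]
  simp only [mul_assoc, mul_left_comm]

theorem symbolCoeff_comp_inv (t : ℂ → ℂ) (k : ℤ) :
    symbolCoeff (fun w => t w⁻¹) k = symbolCoeff t (-k) := by
  have hreflect := intervalIntegral.integral_comp_sub_left (a := 0) (b := 2 * Real.pi)
    (fun θ : ℝ => t (Complex.exp (Complex.I * θ)) *
      Complex.exp (-(Complex.I * ((-k : ℤ) : ℂ) * θ))) (2 * Real.pi)
  rw [sub_self, sub_zero] at hreflect
  simp only [symbolCoeff, ← hreflect]
  congr 1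
  refine intervalIntegral.integral_congr fun θ _ => ?_
  have hpoint : Complex.exp (Complex.I * ((2 * Real.pi - θ : ℝ) : ℂ)) =
      (Complex.exp (Complex.I * θ))⁻¹ := by
    rw [← Complex.exp_neg, Complex.exp_eq_exp_iff_exists_int]
    exact ⟨1, by push_cast; ring⟩
  have hcharacter : Complex.exp (-(Complex.I * ((-k : ℤ) : ℂ) * ((2 * Real.pi - θ : ℝ) : ℂ))) =
      Complex.exp (-(Complex.I * k * θ)) := by
    rw [Complex.exp_eq_exp_iff_exists_int]
    exact ⟨k, by push_cast; ring⟩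
  simp only [hpoint, hcharacter]

theorem symbolCoeff_const (r : ℂ) (k : ℤ) :
    symbolCoeff (fun _ => r) k = if k = 0 then r else 0 := by
  rcases eq_or_ne k 0 with rfl | hk
  · have := Real.pi_ne_zero
    simp only [symbolCoeff, Int.cast_zero, mul_zero, zero_mul, neg_zero, Complex.exp_zero, mul_one,
      intervalIntegral.integral_const, sub_zero, Complex.real_smul, if_true]
    push_cast
    field_simp
  · have hperiod : Complex.exp (-Complex.I * k * ((2 * Real.pi : ℝ) : ℂ)) = 1 :=
      Complex.exp_eq_one_iff.mpr ⟨-k, by push_cast; ring⟩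
    simp only [symbolCoeff, ← neg_mul, intervalIntegral.integral_const_mul, if_neg hk]
    rw [integral_exp_mul_complex (by simp [hk]), hperiod]
    simp

end SymbolCoeff

/-- `HasAbsFourierSeries s p` says that the symbol `s` belongs to the Wiener algebra of the unit
circle, with Fourier series `∑ₖ pₖ wᵏ`. -/
structure HasAbsFourierSeries (s : ℂ → ℂ) (p : ℤ → ℂ) : Prop where
  summable_norm : Summable fun k => ‖p k‖
  hasSum : ∀ w : ℂ, ‖w‖ = 1 → HasSum (fun k => p k * w ^ k) (s w)

namespace HasAbsFourierSeries

variable {s t : ℂ → ℂ} {p : ℤ → ℂ}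

theorem continuous_comp_exp (h : HasAbsFourierSeries s p) :
    Continuous fun θ : ℝ => s (Complex.exp (Complex.I * θ)) := by
  have htsum (θ : ℝ) : s (Complex.exp (Complex.I * θ)) =
      ∑' k, p k * Complex.exp (Complex.I * θ) ^ k :=
    (h.hasSum _ (Complex.norm_exp_I_mul_ofReal θ)).tsum_eq.symm
  simp only [htsum]
  refine continuous_tsum (fun k => ?_) h.summable_norm fun k θ => ?_
  · exact continuous_const.mul
      (Continuous.zpow₀ (by fun_prop) k fun θ => Or.inl (Complex.exp_ne_zero _))
  · simp [Complex.norm_exp_I_mul_ofReal]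

theorem hasSum_symbolCoeff_mul (h : HasAbsFourierSeries s p)
    (ht : IntervalIntegrable (fun θ : ℝ => t (Complex.exp (Complex.I * θ)))
      MeasureTheory.volume 0 (2 * Real.pi)) (n : ℤ) :
    HasSum (fun k => p k * symbolCoeff t (n - k)) (symbolCoeff (fun w => s w * t w) n) := by
  have hterm (k : ℤ) : p k * symbolCoeff t (n - k) =
      symbolCoeff (fun w => p k * w ^ k * t w) n := by
    simp only [← symbolCoeff_zpow_mul, ← symbolCoeff_const_mul, mul_assoc]
  simp only [hterm]
  have hnorm (j : ℤ) (θ : ℝ) : ‖Complex.exp (-(Complex.I * j * θ))‖ = 1 := by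
    simpa [mul_assoc] using Complex.norm_exp_I_mul_ofReal (-(j * θ))
  simp only [symbolCoeff]
  refine HasSum.mul_left _ (intervalIntegral.hasSum_integral_of_dominated_convergence
    (fun k θ => ‖p k‖ * ‖t (Complex.exp (Complex.I * θ))‖) (fun k => ?_) (fun k => ?_) ?_ ?_ ?_)
  · have hcont : Continuous fun θ : ℝ => p k * Complex.exp (Complex.I * θ) ^ k :=
      continuous_const.mul
        (Continuous.zpow₀ (by fun_prop) k fun θ => Or.inl (Complex.exp_ne_zero _))
    exact (hcont.aestronglyMeasurable.mul ht.def'.aestronglyMeasurable).mul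
      (Continuous.aestronglyMeasurable (by fun_prop))
  · refine .of_forall fun θ _ => le_of_eq ?_
    simp [Complex.norm_exp_I_mul_ofReal, hnorm]
  · exact .of_forall fun θ _ => h.summable_norm.mul_right _
  · simp only [tsum_mul_right]
    exact ht.norm.const_mul _
  · exact .of_forall fun θ _ =>
      ((h.hasSum _ (Complex.norm_exp_I_mul_ofReal θ)).mul_right _).mul_right _

theorem symbolCoeff_eq (h : HasAbsFourierSeries s p) : symbolCoeff s = p := by
  funext n
  have hsum := h.hasSum_symbolCoeff_mul (t := fun _ => 1) intervalIntegrable_const n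
  simp only [mul_one, symbolCoeff_const, sub_eq_zero, mul_ite, mul_zero] at hsum
  refine hsum.unique ?_
  simpa only [if_true] using hasSum_single (f := fun k => if n = k then p k else 0) n
    fun k hk => if_neg hk.symm

theorem hasSum_sub_mul_sub (h : HasAbsFourierSeries s p)
    (hs : ∀ w : ℂ, ‖w‖ = 1 → s w * s w⁻¹ = 1) (m n : ℤ) :
    HasSum (fun k => p (m - k) * p (n - k)) (if m = n then 1 else 0) := by
  have hint : IntervalIntegrable (fun θ : ℝ => s (Complex.exp (Complex.I * θ))⁻¹)
      MeasureTheory.volume 0 (2 * Real.pi) := by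
    refine Continuous.intervalIntegrable ?_ _ _
    simpa [Function.comp_def, ← Complex.exp_neg] using h.continuous_comp_exp.comp continuous_neg
  have hsum := h.hasSum_symbolCoeff_mul (t := fun w => s w⁻¹) hint (m - n)
  rw [symbolCoeff_congr hs, symbolCoeff_const, ← (Equiv.subLeft m).hasSum_iff] at hsum
  simpa [Function.comp_def, symbolCoeff_comp_inv, h.symbolCoeff_eq, sub_eq_zero] using hsum

end HasAbsFourierSeries

section Determinants

variable {R m n : Type*} [CommRing R] [Fintype m] [DecidableEq m] [Fintype n] [DecidableEq n]

theorem det_fromBlocks_smul_one_of_isRegular {s : R} (hs : IsRegular s) (A B : Matrix n n R) :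
    (fromBlocks (s • (1 : Matrix n n R)) A B (s • (1 : Matrix n n R))).det =
      (s ^ 2 • (1 : Matrix n n R) - A * B).det := by
  have hmul : fromBlocks (s • (1 : Matrix n n R)) A B (s • (1 : Matrix n n R)) *
      fromBlocks (s • (1 : Matrix n n R)) 0 (-B) 1 =
      fromBlocks (s ^ 2 • (1 : Matrix n n R) - A * B) A 0 (s • (1 : Matrix n n R)) := by
    simp [fromBlocks_multiply, sub_eq_add_neg, smul_smul, pow_two]
  have hdet := congrArg det hmul
  rw [det_mul, det_fromBlocks_zero₁₂, det_fromBlocks_zero₂₁, det_one, mul_one, det_smul, det_one,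
    mul_one] at hdet
  exact (hs.pow _).right hdet

theorem det_fromBlocks_smul_one (s : R) (A B : Matrix n n R) :
    (fromBlocks (s • (1 : Matrix n n R)) A B (s • (1 : Matrix n n R))).det =
      (s ^ 2 • (1 : Matrix n n R) - A * B).det := by
  -- The identity holds over `R[X]` with the regular element `X` in place of `s`; evaluate at `s`.
  have hpoly := congrArg (Polynomial.evalRingHom s) (det_fromBlocks_smul_one_of_isRegular
    Polynomial.isRegular_X (A.map Polynomial.C) (B.map Polynomial.C))
  simp only [RingHom.map_det, RingHom.mapMatrix_apply] at hpoly
  convert hpoly using 2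
  · ext (i | i) (j | j)
    · by_cases hij : i = j <;> simp [hij]
    · simp
    · simp
    · by_cases hij : i = j <;> simp [hij]
  · ext i j
    simp [mul_apply, one_apply, Polynomial.eval_finsetSum, apply_ite]

theorem det_smul_one_sub_mul_comm_of_le (μ : R) (P : Matrix m n R) (Q : Matrix n m R)
    (h : Fintype.card n ≤ Fintype.card m) :
    (μ • (1 : Matrix m m R) - P * Q).det =
      μ ^ (Fintype.card m - Fintype.card n) * (μ • (1 : Matrix n n R) - Q * P).det := by
  have hcharpoly := congrArg (Polynomial.eval μ) (charpoly_mul_comm_of_le P Q h)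
  simpa only [Polynomial.eval_mul, Polynomial.eval_pow, Polynomial.eval_X, eval_charpoly,
    scalar_apply, ← smul_one_eq_diagonal] using hcharpoly

theorem det_smul_one_sub_vecMulVec_sub_vecMulVec (μ : R) (x v y w : n → R)
    (h : 2 ≤ Fintype.card n) :
    (μ • (1 : Matrix n n R) - vecMulVec x v - vecMulVec y w).det =
      μ ^ (Fintype.card n - 2) *
        ((μ - v ⬝ᵥ x) * (μ - w ⬝ᵥ y) - (v ⬝ᵥ y) * (w ⬝ᵥ x)) := by
  have hmul : vecMulVec x v + vecMulVec y w = (Matrix.of ![x, y])ᵀ * Matrix.of ![v, w] := by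
    ext i j
    simp [vecMulVec_apply, mul_apply, Fin.sum_univ_two]
  have hgram : Matrix.of ![v, w] * (Matrix.of ![x, y])ᵀ =
      !![v ⬝ᵥ x, v ⬝ᵥ y; w ⬝ᵥ x, w ⬝ᵥ y] := by
    ext i j
    fin_cases i <;> fin_cases j <;> rfl
  rw [sub_sub, hmul, det_smul_one_sub_mul_comm_of_le _ _ _ (by simpa using h), hgram, det_fin_two]
  simp

end Determinants

section BlockToeplitz

/-- The `N × N` Toeplitz matrix `T_N(t)` of the scalar symbol `t`, the matrix whose determinant is
`toeplitzDet t N`. -/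
noncomputable def toeplitzMatrix (t : ℂ → ℂ) (N : ℕ) : Matrix (Fin N) (Fin N) ℂ :=
  Matrix.of fun m n => symbolCoeff t ((m : ℤ) - n)

variable {N : ℕ}

theorem toeplitzMatrix_const (r : ℂ) :
    toeplitzMatrix (fun _ => r) N = r • (1 : Matrix (Fin N) (Fin N) ℂ) := by
  ext m n
  simp [toeplitzMatrix, symbolCoeff_const, one_apply, sub_eq_zero, Fin.ext_iff]

theorem toeplitzMatrix_neg (t : ℂ → ℂ) :
    toeplitzMatrix (fun w => -t w) N = -toeplitzMatrix t N := by
  ext m n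
  simp [toeplitzMatrix, symbolCoeff_neg]

theorem toeplitzMatrix_comp_inv (t : ℂ → ℂ) :
    toeplitzMatrix (fun w => t w⁻¹) N = (toeplitzMatrix t N)ᵀ := by
  ext m n
  simp [toeplitzMatrix, symbolCoeff_comp_inv]

theorem blockToeplitzDet_eq_det_fromBlocks (Φ : ℂ → Matrix (Fin 2) (Fin 2) ℂ) :
    blockToeplitzDet Φ N =
      (fromBlocks (toeplitzMatrix (fun w => Φ w 0 0) N) (toeplitzMatrix (fun w => Φ w 0 1) N)
        (toeplitzMatrix (fun w => Φ w 1 0) N) (toeplitzMatrix (fun w => Φ w 1 1) N)).det := by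
  let e : Fin N × Fin 2 ≃ Fin N ⊕ Fin N :=
    (Equiv.prodComm _ _).trans
      ((Equiv.prodCongr finTwoEquiv (Equiv.refl _)).trans (Equiv.boolProdEquivSum _))
  rw [blockToeplitzDet, ← det_submatrix_equiv_self e]
  congr 1
  ext ⟨m, i⟩ ⟨n, j⟩
  fin_cases i <;> fin_cases j <;> rfl

theorem blockToeplitzDet_eq_det_sq_add_mul_transpose (s : ℂ) (u : ℂ → ℂ) :
    blockToeplitzDet (fun w => !![s, u w; -u w⁻¹, s]) N =
      (s ^ 2 • (1 : Matrix (Fin N) (Fin N) ℂ) +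
        toeplitzMatrix u N * (toeplitzMatrix u N)ᵀ).det := by
  rw [blockToeplitzDet_eq_det_fromBlocks]
  simp only [of_apply, cons_val', cons_val_zero, cons_val_one, cons_val_fin_one]
  rw [toeplitzMatrix_neg (fun w => u w⁻¹), toeplitzMatrix_comp_inv, toeplitzMatrix_const,
    det_fromBlocks_smul_one, mul_neg, sub_neg_eq_add]

end BlockToeplitz

section BlaschkeQuotient

/-- The bilinear pseudohyperbolic difference `(c - a) / (1 - a c)`. For real parameters in the unit
disc its absolute value is the pseudohyperbolic distance; no complex conjugation is involved. -/
noncomputable def pseudohyperbolicDiff (a c : ℂ) : ℂ :=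
  (c - a) / (1 - a * c)

/-- The quotient of the factors `(w - a) / (1 - a w)` and `(w - c) / (1 - c w)`, which are Blaschke
factors when `a` and `c` are real. The symbol of the chain is the case `c = b⁻¹`. -/
noncomputable def blaschkeQuotient (a c w : ℂ) : ℂ :=
  ((w - a) * (1 - c * w)) / ((1 - a * w) * (w - c))

/-- The Fourier coefficients of `blaschkeQuotient a c` for `a` and `c` in the open unit disc. -/
noncomputable def blaschkeQuotientCoeff (a c : ℂ) : ℤ → ℂ
  | .ofNat 0 => 1 - pseudohyperbolicDiff a c * (c - a)
  | .ofNat (j + 1) => -(pseudohyperbolicDiff a c * (1 - a ^ 2) * a ^ j)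
  | .negSucc j => pseudohyperbolicDiff a c * (1 - c ^ 2) * c ^ j

variable {a c w : ℂ}

theorem blaschkeQuotientCoeff_zero :
    blaschkeQuotientCoeff a c 0 = 1 - pseudohyperbolicDiff a c * (c - a) := rfl

theorem blaschkeQuotientCoeff_natCast_add_one (j : ℕ) :
    blaschkeQuotientCoeff a c (j + 1) = -(pseudohyperbolicDiff a c * (1 - a ^ 2) * a ^ j) := rfl

theorem blaschkeQuotientCoeff_neg_natCast_add_one (j : ℕ) :
    blaschkeQuotientCoeff a c (-(j + 1)) = pseudohyperbolicDiff a c * (1 - c ^ 2) * c ^ j := by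
  rw [← Int.negSucc_eq]
  rfl

theorem one_sub_mul_ne_zero (ha : ‖a‖ < 1) (hw : ‖w‖ ≤ 1) : 1 - a * w ≠ 0 := by
  intro h
  have hnorm : ‖a‖ * ‖w‖ = 1 := by rw [← norm_mul, ← sub_eq_zero.mp h, norm_one]
  nlinarith [norm_nonneg a]

theorem sub_ne_zero_of_norm_lt_one (hc : ‖c‖ < 1) (hw : ‖w‖ = 1) : w - c ≠ 0 := by
  refine sub_ne_zero_of_ne ?_
  rintro rfl
  exact hc.ne hw

theorem blaschkeQuotient_ne_zero (ha : ‖a‖ < 1) (hc : ‖c‖ < 1) (hw : ‖w‖ = 1) :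
    blaschkeQuotient a c w ≠ 0 :=
  div_ne_zero
    (mul_ne_zero (sub_ne_zero_of_norm_lt_one ha hw) (one_sub_mul_ne_zero hc hw.le))
    (mul_ne_zero (one_sub_mul_ne_zero ha hw.le) (sub_ne_zero_of_norm_lt_one hc hw))

theorem blaschkeQuotient_inv (hw : w ≠ 0) :
    blaschkeQuotient a c w⁻¹ = (blaschkeQuotient a c w)⁻¹ := by
  have hnum : (w⁻¹ - a) * (1 - c * w⁻¹) = ((1 - a * w) * (w - c)) / w ^ 2 := by field_simp
  have hden : (1 - a * w⁻¹) * (w⁻¹ - c) = ((w - a) * (1 - c * w)) / w ^ 2 := by field_simp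
  rw [blaschkeQuotient, blaschkeQuotient, inv_div, hnum, hden,
    div_div_div_cancel_right₀ (pow_ne_zero 2 hw)]

theorem blaschkeQuotient_eq_add (hac : 1 - a * c ≠ 0) (haw : 1 - a * w ≠ 0) (hw : w ≠ 0)
    (hwc : w - c ≠ 0) :
    blaschkeQuotient a c w =
      -(pseudohyperbolicDiff a c * (1 - a ^ 2)) * w * (1 - a * w)⁻¹ +
        (1 - pseudohyperbolicDiff a c * (c - a)) +
        pseudohyperbolicDiff a c * (1 - c ^ 2) * w⁻¹ * (1 - c * w⁻¹)⁻¹ := by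
  have hcw : 1 - c * w⁻¹ = (w - c) / w := by field_simp
  have hwa : 1 - w * a ≠ 0 := by rwa [mul_comm]
  rw [blaschkeQuotient, pseudohyperbolicDiff, hcw]
  field_simp
  ring

theorem hasAbsFourierSeries_blaschkeQuotient (ha : ‖a‖ < 1) (hc : ‖c‖ < 1) :
    HasAbsFourierSeries (blaschkeQuotient a c) (blaschkeQuotientCoeff a c) where
  summable_norm := by
    have hgeom {z : ℂ} (hz : ‖z‖ < 1) (r : ℂ) : Summable fun j : ℕ => ‖r * z ^ j‖ := by
      simpa only [norm_mul, norm_pow] using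
        (summable_geometric_of_lt_one (norm_nonneg z) hz).mul_left ‖r‖
    refine .of_add_one_of_neg_add_one ?_ ?_
    · simpa only [blaschkeQuotientCoeff_natCast_add_one, norm_neg] using hgeom ha _
    · simpa only [blaschkeQuotientCoeff_neg_natCast_add_one] using hgeom hc _
  hasSum w hw := by
    have hw₀ : w ≠ 0 := norm_ne_zero_iff.mp (by simp [hw])
    have hconst : 1 - pseudohyperbolicDiff a c * (c - a) =
        blaschkeQuotientCoeff a c 0 * w ^ (0 : ℤ) := by
      rw [blaschkeQuotientCoeff_zero, zpow_zero, mul_one]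
    rw [blaschkeQuotient_eq_add (one_sub_mul_ne_zero ha hc.le) (one_sub_mul_ne_zero ha hw.le) hw₀
      (sub_ne_zero_of_norm_lt_one hc hw), hconst]
    have haw : ‖a * w‖ < 1 := by simpa [hw] using ha
    have hcw : ‖c * w⁻¹‖ < 1 := by simpa [hw] using hc
    refine .of_add_one_of_neg_add_one ?_ ?_
    · refine ((hasSum_geometric_of_norm_lt_one haw).mul_left _).congr_fun fun j => ?_
      rw [blaschkeQuotientCoeff_natCast_add_one, zpow_add_one₀ hw₀, zpow_natCast]
      ring
    · refine ((hasSum_geometric_of_norm_lt_one hcw).mul_left _).congr_fun fun j => ?_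
      rw [blaschkeQuotientCoeff_neg_natCast_add_one, _root_.zpow_neg, zpow_add_one₀ hw₀,
        zpow_natCast]
      ring

end BlaschkeQuotient

section Gram

theorem sum_fin_eq_sub_of_hasSum {E : Type*} [AddCommGroup E] [TopologicalSpace E]
    [IsTopologicalAddGroup E] [T2Space E] {f : ℤ → E} {s x y : E} {N : ℕ} (hf : HasSum f s)
    (hx : HasSum (fun j : ℕ => f (-(j + 1))) x) (hy : HasSum (fun j : ℕ => f (j + N)) y) :
    ∑ i : Fin N, f i = s - x - y := by
  have hnat : HasSum (fun j : ℕ => f j) (y + ∑ i ∈ Finset.range N, f i) :=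
    (hasSum_nat_add_iff N).mp (by simpa only [Nat.cast_add] using hy)
  rw [hf.unique (hnat.of_nat_of_neg_add_one hx), Finset.sum_range (fun i : ℕ => f i)]
  abel

theorem hasSum_pow_add_mul_pow_add {K : Type*} [NormedField K] {z : K} (hz : ‖z‖ < 1) (m n : ℕ) :
    HasSum (fun j : ℕ => z ^ (m + j) * z ^ (n + j)) (z ^ m * z ^ n * (1 - z ^ 2)⁻¹) := by
  have hz_sq : ‖z ^ 2‖ < 1 := by
    rw [norm_pow]
    exact pow_lt_one₀ (norm_nonneg z) hz two_ne_zero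
  refine ((hasSum_geometric_of_norm_lt_one hz_sq).mul_left (z ^ m * z ^ n)).congr_fun fun j => ?_
  ring

variable {a c : ℂ}

theorem one_sub_sq_ne_zero (ha : ‖a‖ < 1) : 1 - a ^ 2 ≠ 0 := by
  simpa only [pow_two] using one_sub_mul_ne_zero ha ha.le

theorem hasSum_sq_mul_pow_add_mul_pow_add (ha : ‖a‖ < 1) (r : ℂ) (m n : ℕ) :
    HasSum (fun j : ℕ => (r * (1 - a ^ 2) * a ^ (m + j)) * (r * (1 - a ^ 2) * a ^ (n + j)))
      (r ^ 2 * (1 - a ^ 2) * (a ^ m * a ^ n)) := by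
  have ha₀ : 1 - a ^ 2 ≠ 0 := one_sub_sq_ne_zero ha
  have hvalue : r ^ 2 * (1 - a ^ 2) * (a ^ m * a ^ n) =
      (r * (1 - a ^ 2)) ^ 2 * (a ^ m * a ^ n * (1 - a ^ 2)⁻¹) := by
    field_simp
  rw [hvalue]
  refine ((hasSum_pow_add_mul_pow_add ha m n).mul_left _).congr_fun fun j => ?_
  ring

theorem sum_blaschkeQuotientCoeff_mul (ha : ‖a‖ < 1) (hc : ‖c‖ < 1) {N : ℕ} (m n : Fin N) :
    ∑ k : Fin N, blaschkeQuotientCoeff a c (m - k) * blaschkeQuotientCoeff a c (n - k) =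
      (if m = n then 1 else 0) -
        pseudohyperbolicDiff a c ^ 2 * (1 - a ^ 2) * (a ^ (m : ℕ) * a ^ (n : ℕ)) -
        pseudohyperbolicDiff a c ^ 2 * (1 - c ^ 2) * (c ^ (m.rev : ℕ) * c ^ (n.rev : ℕ)) := by
  have htotal := (hasAbsFourierSeries_blaschkeQuotient ha hc).hasSum_sub_mul_sub (fun w hw => by
    rw [blaschkeQuotient_inv (norm_ne_zero_iff.mp (by simp [hw])),
      mul_inv_cancel₀ (blaschkeQuotient_ne_zero ha hc hw)]) m n
  simp only [Nat.cast_inj, Fin.val_inj] at htotal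
  refine sum_fin_eq_sub_of_hasSum htotal ?_ ?_
  · refine (hasSum_sq_mul_pow_add_mul_pow_add ha _ m n).congr_fun fun j => ?_
    have hindex (i : Fin N) : (i : ℤ) - -(j + 1) = ((i + j : ℕ) : ℤ) + 1 := by
      push_cast
      ring
    rw [hindex, hindex, blaschkeQuotientCoeff_natCast_add_one,
      blaschkeQuotientCoeff_natCast_add_one, neg_mul_neg]
  · refine (hasSum_sq_mul_pow_add_mul_pow_add hc _ m.rev n.rev).congr_fun fun j => ?_
    have hindex (i : Fin N) : (i : ℤ) - (j + N) = -(((i.rev + j : ℕ) : ℤ) + 1) := by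
      have := i.isLt
      rw [Fin.val_rev]
      omega
    rw [hindex, hindex, blaschkeQuotientCoeff_neg_natCast_add_one,
      blaschkeQuotientCoeff_neg_natCast_add_one]

end Gram

section GeometricVector

/-- The vector `(1, z, …, z ^ (N - 1))`, the direction in which a geometric tail of Fourier
coefficients acts. -/
def geometricVector {M : Type*} [Monoid M] (z : M) (N : ℕ) : Fin N → M :=
  fun i => z ^ (i : ℕ)

variable {R : Type*} [CommRing R]

theorem geometricVector_dotProduct_self (x : R) (N : ℕ) :
    geometricVector x N ⬝ᵥ geometricVector x N * (1 - x ^ 2) = 1 - x ^ (2 * N) := by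
  simp only [geometricVector, dotProduct, ← pow_two, pow_right_comm x _ 2]
  rw [← Finset.sum_range (fun i => (x ^ 2) ^ i), geom_sum_mul_neg, pow_mul]

theorem geometricVector_rev_dotProduct_self (x : R) (N : ℕ) :
    (geometricVector x N ∘ Fin.rev) ⬝ᵥ (geometricVector x N ∘ Fin.rev) * (1 - x ^ 2) =
      1 - x ^ (2 * N) := by
  rw [← geometricVector_dotProduct_self]
  exact congrArg (· * _) (comp_equiv_dotProduct_comp_equiv _ _ Fin.revPerm)

theorem geometricVector_dotProduct_rev (x y : R) (N : ℕ) :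
    geometricVector x N ⬝ᵥ (geometricVector y N ∘ Fin.rev) * (x - y) = x ^ N - y ^ N := by
  rw [← (Commute.all x y).geom_sum₂_mul, Finset.sum_range]
  simp only [geometricVector, dotProduct, Function.comp_apply, Fin.val_rev, Nat.sub_add_eq,
    Nat.sub_right_comm]

end GeometricVector

section BlaschkeQuotientDeterminant

variable {a c : ℂ} {N : ℕ}

theorem toeplitzMatrix_blaschkeQuotient_mul_transpose (ha : ‖a‖ < 1) (hc : ‖c‖ < 1) :
    toeplitzMatrix (blaschkeQuotient a c) N * (toeplitzMatrix (blaschkeQuotient a c) N)ᵀ =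
      1 - vecMulVec ((pseudohyperbolicDiff a c ^ 2 * (1 - a ^ 2)) • geometricVector a N)
          (geometricVector a N) -
        vecMulVec ((pseudohyperbolicDiff a c ^ 2 * (1 - c ^ 2)) • (geometricVector c N ∘ Fin.rev))
          (geometricVector c N ∘ Fin.rev) := by
  ext m n
  simpa [toeplitzMatrix, (hasAbsFourierSeries_blaschkeQuotient ha hc).symbolCoeff_eq, mul_apply,
    vecMulVec_apply, one_apply, geometricVector, mul_assoc] using
    sum_blaschkeQuotientCoeff_mul ha hc m n

theorem one_sub_sq_mul_one_sub_sq_eq (hac : 1 - a * c ≠ 0) :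
    (1 - a ^ 2) * (1 - c ^ 2) = (1 - a * c) ^ 2 * (1 - pseudohyperbolicDiff a c ^ 2) := by
  rw [pseudohyperbolicDiff]
  field_simp
  ring

theorem pseudohyperbolicDiff_mul_dotProduct_rev (hac : 1 - a * c ≠ 0) :
    (1 - a * c) * (pseudohyperbolicDiff a c *
      (geometricVector a N ⬝ᵥ (geometricVector c N ∘ Fin.rev))) = c ^ N - a ^ N := by
  have hdot := geometricVector_dotProduct_rev a c N
  rw [pseudohyperbolicDiff]
  field_simp
  linear_combination -hdot

theorem det_smul_one_add_toeplitzMatrix_mul_transpose (ha : ‖a‖ < 1) (hc : ‖c‖ < 1)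
    (hN : 2 ≤ N) (t : ℂ) :
    (t • (1 : Matrix (Fin N) (Fin N) ℂ) + toeplitzMatrix (blaschkeQuotient a c) N *
        (toeplitzMatrix (blaschkeQuotient a c) N)ᵀ).det =
      (1 + t) ^ (N - 2) *
        (t ^ 2 + t * (2 - pseudohyperbolicDiff a c ^ 2 * (2 - a ^ (2 * N) - c ^ (2 * N))) +
          (1 - pseudohyperbolicDiff a c ^ 2 * (1 - a ^ N * c ^ N)) ^ 2) := by
  have hac : 1 - a * c ≠ 0 := one_sub_mul_ne_zero ha hc.le
  have hid := one_sub_sq_mul_one_sub_sq_eq hac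
  have hself := geometricVector_dotProduct_self a N
  have hself_rev := geometricVector_rev_dotProduct_self c N
  have hcross := pseudohyperbolicDiff_mul_dotProduct_rev (N := N) hac
  have hsplit : t • (1 : Matrix (Fin N) (Fin N) ℂ) + 1 = (1 + t) • 1 := by
    rw [add_comm 1 t, add_smul, one_smul]
  rw [toeplitzMatrix_blaschkeQuotient_mul_transpose ha hc, add_sub, add_sub, hsplit,
    det_smul_one_sub_vecMulVec_sub_vecMulVec _ _ _ _ _ (by simpa using hN), Fintype.card_fin]
  simp only [dotProduct_smul, smul_eq_mul, dotProduct_comm (geometricVector c N ∘ Fin.rev)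
    (geometricVector a N)]
  congr 1
  set κ := pseudohyperbolicDiff a c
  set S := geometricVector a N ⬝ᵥ (geometricVector c N ∘ Fin.rev)
  have hoff : κ ^ 4 * ((1 - a ^ 2) * (1 - c ^ 2)) * S ^ 2 =
      κ ^ 2 * (1 - κ ^ 2) * (c ^ N - a ^ N) ^ 2 := by
    rw [hid, ← hcross]
    ring
  have hdiag : κ ^ 2 * (1 - a ^ 2) * (geometricVector a N ⬝ᵥ geometricVector a N) =
      κ ^ 2 * (1 - a ^ (2 * N)) := by
    linear_combination κ ^ 2 * hself
  have hdiag_rev : κ ^ 2 * (1 - c ^ 2) *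
      ((geometricVector c N ∘ Fin.rev) ⬝ᵥ (geometricVector c N ∘ Fin.rev)) =
      κ ^ 2 * (1 - c ^ (2 * N)) := by
    linear_combination κ ^ 2 * hself_rev
  rw [hdiag, hdiag_rev]
  linear_combination -hoff

end BlaschkeQuotientDeterminant

section Chain

variable {a b : ℂ}

theorem blaschkeQuotient_inv_right (hb : b ≠ 0) (w : ℂ) :
    blaschkeQuotient a b⁻¹ w = ((w - a) * (w - b)) / ((1 - a * w) * (1 - b * w)) := by
  have hnum : 1 - b⁻¹ * w = (w - b) * -b⁻¹ := by field_simp; ring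
  have hden : w - b⁻¹ = (1 - b * w) * -b⁻¹ := by field_simp; ring
  rw [blaschkeQuotient, hnum, hden, ← mul_assoc, ← mul_assoc,
    mul_div_mul_right _ _ (neg_ne_zero.mpr (inv_ne_zero hb))]

theorem pseudohyperbolicDiff_inv_right (hb : b ≠ 0) :
    pseudohyperbolicDiff a b⁻¹ = (1 - a * b) / (b - a) := by
  rw [pseudohyperbolicDiff, ← mul_div_mul_right _ _ hb]
  simp [sub_mul, hb]

end Chain

theorem example_three_char_poly_general {a b : ℂ} (ha : ‖a‖ < 1) (hb : 1 < ‖b‖) {N : ℕ}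
    (hN : 2 ≤ N) (lam : ℂ) :
    blockToeplitzDet
      (fun w => !![Complex.I * lam, ((w - a) * (w - b)) / ((1 - a * w) * (1 - b * w));
                   -(((w⁻¹ - a) * (w⁻¹ - b)) / ((1 - a * w⁻¹) * (1 - b * w⁻¹))),
                   Complex.I * lam]) N
      = (1 - lam ^ 2) ^ (N - 2) *
        (lam ^ 4 +
          (lam ^ 2 / (b - a) ^ 2) *
            (2 * (1 - a ^ 2) * (1 - b ^ 2) -
              (1 - a * b) ^ 2 * (a ^ (2 * N) + b ^ (-(2 * (N : ℤ))))) +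
          ((a ^ N * b ^ (-(N : ℤ)) * (1 - a * b) ^ 2 -
              (1 - a ^ 2) * (1 - b ^ 2)) / (b - a) ^ 2) ^ 2) := by
  have hb₀ : b ≠ 0 := norm_pos_iff.mp (one_pos.trans hb)
  have hba : b - a ≠ 0 := sub_ne_zero_of_ne fun h => (ha.trans hb).ne (congrArg norm h).symm
  have hb_inv : ‖b⁻¹‖ < 1 := by rw [norm_inv]; exact inv_lt_one_of_one_lt₀ hb
  have hpow : b ^ (-(N : ℤ)) = b⁻¹ ^ N := by rw [_root_.zpow_neg, zpow_natCast, inv_pow]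
  have hpow_two : b ^ (-(2 * (N : ℤ))) = b⁻¹ ^ (2 * N) := by
    rw [_root_.zpow_neg, inv_pow]; norm_cast
  simp only [← blaschkeQuotient_inv_right hb₀]
  rw [blockToeplitzDet_eq_det_sq_add_mul_transpose,
    det_smul_one_add_toeplitzMatrix_mul_transpose ha hb_inv hN, pseudohyperbolicDiff_inv_right hb₀,
    hpow, hpow_two, mul_pow, Complex.I_sq, neg_one_mul, ← sub_eq_add_neg]
  congr 1
  field_simp
  ring

/-- Example 3 (one zero inside, one outside): characteristic polynomial of the correlation
matrix for `f(z) = z⁻²(z−a)²(z−b)²` with `0 < |a| < 1 < |b|` and `ab ≠ 1`. -/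
theorem example_three_char_poly
    (a b : ℝ) (ha0 : 0 < |a|) (ha1 : |a| < 1) (hb : 1 < |b|) (hab : a * b ≠ 1)
    (N : ℕ) (hN : 2 ≤ N) (lam : ℂ) :
    blockToeplitzDet
      (fun w => !![Complex.I * lam,
                   ((w - (a : ℂ)) * (w - (b : ℂ))) / ((1 - (a : ℂ) * w) * (1 - (b : ℂ) * w));
                   -(((w⁻¹ - (a : ℂ)) * (w⁻¹ - (b : ℂ))) /
                      ((1 - (a : ℂ) * w⁻¹) * (1 - (b : ℂ) * w⁻¹))),
                   Complex.I * lam]) N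
      = (1 - lam ^ 2) ^ (N - 2) *
        (lam ^ 4 +
          (lam ^ 2 / ((b : ℂ) - a) ^ 2) *
            (2 * (1 - (a : ℂ) ^ 2) * (1 - (b : ℂ) ^ 2) -
              (1 - (a : ℂ) * b) ^ 2 * ((a : ℂ) ^ (2 * N) + (b : ℂ) ^ (-(2 * (N : ℤ))))) +
          (((a : ℂ) ^ N * (b : ℂ) ^ (-(N : ℤ)) * (1 - (a : ℂ) * b) ^ 2 -
              (1 - (a : ℂ) ^ 2) * (1 - (b : ℂ) ^ 2)) / ((b : ℂ) - a) ^ 2) ^ 2) := by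
  exact example_three_char_poly_general (by simpa using ha1) (by simpa using hb) hN lam
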